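/- Let q > 3 be an odd prime power. The number of pairs (A,B) ∈ F_q × F_q such that f_{A,B}(x) = x(x^{q²} + A x^q + B x) is planar on F_{q³} equals 3q - 2 - 4·gcd(3, q-1). -/

import Mathlib

/-!
Write `σ` for the Frobenius of `E` over `F`. Planarity of `f = f_{A,B}` says that
`f (x + c) - f x - f c ≠ 0` whenever `x, c ≠ 0`. For fixed `c` this expression is `σ`-linearized in
`x`, so it has a nonzero zero exactly when its adjoint has one. The adjoint at `b` is again
`σ`-linearized in `c`, but its Dickson determinant, a cubic form in `b, σ b, σ² b`, has no
`b³`-terms: up to the norm of `b` it is an affine function of `tr u` and `tr u⁻¹`, where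
`u = σ b / b`. By Hilbert 90, `u` ranges over all elements of norm one.

Planarity thus says that no `u` of norm one has `(tr u, tr u⁻¹)` on a certain line. A point `(t, s)`
of the plane is a cubic `x³ - t x² + s x - 1`, and every irreducible such cubic is the
characteristic polynomial of some `u`. Unless the line is empty or consists of all cubics with a
given root, its cubics share no root, and then its `q` cubics cannot all have a root among the
`q - 1` nonzero elements. This forces a condition on `A` and `B` that factors into three curves,
whose points are counted by inclusion-exclusion.
-/

/-- A self-map `f` of an additive group is *planar* if all its difference maps
`x ↦ f (x + c) - f x` with `c ≠ 0` are bijective. -/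
def IsPlanar {G : Type*} [AddGroup G] (f : G → G) : Prop :=
  ∀ c : G, c ≠ 0 → Function.Bijective fun x => f (x + c) - f x

theorem isPlanar_iff_polar_ne_zero {G : Type*} [AddCommGroup G] [Finite G] {f : G → G}
    (hf : ∀ x y c, QuadraticMap.polar f (x + y) c =
      QuadraticMap.polar f x c + QuadraticMap.polar f y c) :
    IsPlanar f ↔ ∀ c, c ≠ 0 → ∀ x, x ≠ 0 → QuadraticMap.polar f x c ≠ 0 := by
  refine forall₂_congr fun c _ => ?_
  have hdiff : (fun x => f (x + c) - f x) =
      (Equiv.addRight (f c)) ∘ AddMonoidHom.mk' (QuadraticMap.polar f · c) fun x y => hf x y c := by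
    ext x
    simp [QuadraticMap.polar]
  rw [hdiff, Equiv.comp_bijective, ← Finite.injective_iff_bijective, injective_iff_map_eq_zero]
  exact forall_congr' fun x => not_imp_not.symm

section Dickson

variable {F E : Type*} [Field F] [Field E] [Algebra F E] {σ : Gal(E/F)}

theorem apply_apply_apply_of_orderOf_eq_three (hσ : orderOf σ = 3) (x : E) :
    σ (σ (σ x)) = x :=
  DFunLike.congr_fun (orderOf_dvd_iff_pow_eq_one.mp hσ.dvd) x

theorem eq_zero_of_forall_mul_add_eq_zero (hσ : orderOf σ = 3) {a b c : E}
    (h : ∀ x, a * x + b * σ x + c * σ (σ x) = 0) : a = 0 ∧ b = 0 ∧ c = 0 := by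
  have hinj : Function.Injective fun i : Fin 3 => ((σ ^ (i : ℕ) : Gal(E/F)) : E →* E) := by
    intro i j hij
    have hpow : σ ^ (i : ℕ) = σ ^ (j : ℕ) :=
      AlgEquiv.ext fun x => DFunLike.congr_fun (F := E →* E) hij x
    exact Fin.ext (pow_injOn_Iio_orderOf (by simp [hσ]) (by simp [hσ]) hpow)
  have hli := (linearIndependent_monoidHom E E).comp _ hinj
  have hcoeff := Fintype.linearIndependent_iff.mp hli ![a, b, c] <| by
    ext x
    simpa [Fin.sum_univ_three, pow_two] using h x
  exact ⟨hcoeff 0, hcoeff 1, hcoeff 2⟩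

/-- The Dickson matrix of the `σ`-linearized polynomial `a x + b σ(x) + c σ²(x)`, for `σ` of
order three: its rows express the polynomial and its two conjugates in terms of
`x, σ(x), σ²(x)`. -/
def dicksonMatrix (σ : Gal(E/F)) (a b c : E) : Matrix (Fin 3) (Fin 3) E :=
  !![a, b, c; σ c, σ a, σ b; σ (σ b), σ (σ c), σ (σ a)]

theorem dicksonMatrix_transpose (hσ : orderOf σ = 3) (a b c : E) :
    (dicksonMatrix σ a b c).transpose = dicksonMatrix σ a (σ c) (σ (σ b)) := by
  ext i j
  fin_cases i <;> fin_cases j <;>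
    simp [dicksonMatrix, apply_apply_apply_of_orderOf_eq_three hσ]

theorem det_dicksonMatrix (a b c : E) :
    (dicksonMatrix σ a b c).det =
      a * σ a * σ (σ a) - a * σ b * σ (σ c) - b * σ c * σ (σ a) + b * σ b * σ (σ b) +
        c * σ c * σ (σ c) - c * σ a * σ (σ b) := by
  simp [dicksonMatrix, Matrix.det_fin_three]

theorem dicksonMatrix_mulVec (a b c : E) (v : Fin 3 → E) :
    (dicksonMatrix σ a b c).mulVec v =
      ![a * v 0 + b * v 1 + c * v 2, σ c * v 0 + σ a * v 1 + σ b * v 2,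
        σ (σ b) * v 0 + σ (σ c) * v 1 + σ (σ a) * v 2] := by
  ext i
  fin_cases i <;> simp [dicksonMatrix, Matrix.mulVec, dotProduct, Fin.sum_univ_three]

theorem dicksonMatrix_mulVec_conjugates (hσ : orderOf σ = 3) (a b c x : E) :
    (dicksonMatrix σ a b c).mulVec ![x, σ x, σ (σ x)] =
      ![a * x + b * σ x + c * σ (σ x), σ (a * x + b * σ x + c * σ (σ x)),
        σ (σ (a * x + b * σ x + c * σ (σ x)))] := by
  simp only [dicksonMatrix_mulVec, Matrix.cons_val, map_add, map_mul,
    apply_apply_apply_of_orderOf_eq_three hσ]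
  ring_nf

theorem exists_ne_zero_of_det_dicksonMatrix_eq_zero (hσ : orderOf σ = 3) {a b c : E}
    (h : (dicksonMatrix σ a b c).det = 0) :
    ∃ x, x ≠ 0 ∧ a * x + b * σ x + c * σ (σ x) = 0 := by
  obtain ⟨v, hv, hMv⟩ := Matrix.exists_mulVec_eq_zero_iff.mpr h
  rw [dicksonMatrix_mulVec] at hMv
  have hcube := apply_apply_apply_of_orderOf_eq_three hσ
  have row₀ : a * v 0 + b * v 1 + c * v 2 = 0 := congrFun hMv 0
  have row₁ : c * σ (σ (v 0)) + a * σ (σ (v 1)) + b * σ (σ (v 2)) = 0 := by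
    simpa [hcube] using congrArg (fun y => σ (σ y)) (congrFun hMv 1)
  have row₂ : b * σ (v 0) + c * σ (v 1) + a * σ (v 2) = 0 := by
    simpa [hcube] using congrArg σ (congrFun hMv 2)
  -- Each `v 0 * e + σ (v 2 * e) + σ² (v 1 * e)` is a zero; by independence of characters they
  -- do not all vanish.
  by_contra! hnone
  have hzero : ∀ e, v 0 * e + σ (v 2) * σ e + σ (σ (v 1)) * σ (σ e) = 0 := by
    intro e
    by_contra hne
    apply hnone _ hne
    simp only [map_add, map_mul, hcube]
    linear_combination e * row₀ + σ e * row₂ + σ (σ e) * row₁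
  obtain ⟨h₀, h₂, h₁⟩ := eq_zero_of_forall_mul_add_eq_zero hσ hzero
  apply hv
  ext i
  fin_cases i <;> simp_all

theorem exists_ne_zero_iff_det_dicksonMatrix_eq_zero (hσ : orderOf σ = 3) (a b c : E) :
    (∃ x, x ≠ 0 ∧ a * x + b * σ x + c * σ (σ x) = 0) ↔ (dicksonMatrix σ a b c).det = 0 := by
  refine ⟨?_, exists_ne_zero_of_det_dicksonMatrix_eq_zero hσ⟩
  rintro ⟨x, hx, h⟩
  refine Matrix.exists_mulVec_eq_zero_iff.mp ⟨![x, σ x, σ (σ x)], fun hv => hx (congrFun hv 0), ?_⟩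
  rw [dicksonMatrix_mulVec_conjugates hσ, h]
  ext i
  fin_cases i <;> simp

theorem exists_ne_zero_iff_exists_ne_zero_adjoint (hσ : orderOf σ = 3) (a b c : E) :
    (∃ x, x ≠ 0 ∧ a * x + b * σ x + c * σ (σ x) = 0) ↔
      ∃ x, x ≠ 0 ∧ a * x + σ c * σ x + σ (σ b) * σ (σ x) = 0 := by
  rw [exists_ne_zero_iff_det_dicksonMatrix_eq_zero hσ,
    exists_ne_zero_iff_det_dicksonMatrix_eq_zero hσ, ← dicksonMatrix_transpose hσ,
    Matrix.det_transpose]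

end Dickson

section Trinomial

variable {F E : Type*} [Field F] [Field E] [Algebra F E] {σ : Gal(E/F)}

/-- The function `f_{A,B}(x) = x (σ²(x) + A σ(x) + B x)`; the trinomial of the theorem is the case
where `σ` is the `q`-power Frobenius automorphism. -/
def trinomial (σ : Gal(E/F)) (A B : F) (x : E) : E :=
  x * (σ (σ x) + algebraMap F E A * σ x + algebraMap F E B * x)

/-- Half the coefficient of `b σ(b) σ²(b)` in the Dickson determinant that governs the planarity
of `trinomial σ A B`, see `det_dicksonMatrix_trinomial`. -/
def normCoeff {F : Type*} [Field F] (A B : F) : F :=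
  4 * B ^ 3 + A ^ 3 + 1 - 6 * A * B

theorem polar_trinomial (A B : F) (x c : E) :
    QuadraticMap.polar (trinomial σ A B) x c =
      (σ (σ c) + algebraMap F E A * σ c + 2 * algebraMap F E B * c) * x +
        algebraMap F E A * c * σ x + c * σ (σ x) := by
  simp only [QuadraticMap.polar, trinomial, map_add]
  ring

theorem isPlanar_trinomial_iff_det_ne_zero [Finite E] (hσ : orderOf σ = 3) (A B : F) :
    IsPlanar (trinomial σ A B) ↔ ∀ b : E, b ≠ 0 →
      (dicksonMatrix σ (2 * algebraMap F E B * b) (σ b + algebraMap F E A * b)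
        (b + algebraMap F E A * σ (σ b))).det ≠ 0 := by
  have hadd : ∀ x y c, QuadraticMap.polar (trinomial σ A B) (x + y) c =
      QuadraticMap.polar (trinomial σ A B) x c + QuadraticMap.polar (trinomial σ A B) y c := by
    intro x y c
    simp only [polar_trinomial, map_add]
    ring
  -- The adjoint of `x ↦ polar f x c` at `b` is again `σ`-linearized in `c`.
  have hadjoint : ∀ c : E, (∃ x, x ≠ 0 ∧ QuadraticMap.polar (trinomial σ A B) x c = 0) ↔
      ∃ b, b ≠ 0 ∧ 2 * algebraMap F E B * b * c + (σ b + algebraMap F E A * b) * σ c +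
        (b + algebraMap F E A * σ (σ b)) * σ (σ c) = 0 := by
    intro c
    simp only [polar_trinomial]
    rw [exists_ne_zero_iff_exists_ne_zero_adjoint hσ]
    refine exists_congr fun b => and_congr_right fun _ => Eq.congr_left ?_
    simp only [map_mul, AlgEquiv.commutes]
    ring
  rw [isPlanar_iff_polar_ne_zero hadd, ← not_iff_not]
  push Not
  simp only [hadjoint, ← exists_ne_zero_iff_det_dicksonMatrix_eq_zero hσ]
  exact ⟨fun ⟨c, hc, b, hb, h⟩ => ⟨b, hb, c, hc, h⟩, fun ⟨b, hb, c, hc, h⟩ => ⟨c, hc, b, hb, h⟩⟩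

theorem det_dicksonMatrix_trinomial (hσ : orderOf σ = 3) (A B : F) (b : E) :
    (dicksonMatrix σ (2 * algebraMap F E B * b) (σ b + algebraMap F E A * b)
        (b + algebraMap F E A * σ (σ b))).det =
      2 * (algebraMap F E (normCoeff A B) * (b * σ b * σ (σ b)) +
        algebraMap F E (A * (1 - A * B)) *
          (b ^ 2 * σ (σ b) + (σ b) ^ 2 * b + (σ (σ b)) ^ 2 * σ b) +
        algebraMap F E (A ^ 2 - B) *
          (b ^ 2 * σ b + (σ b) ^ 2 * σ (σ b) + (σ (σ b)) ^ 2 * b)) := by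
  simp only [normCoeff, det_dicksonMatrix, map_add, map_sub, map_mul, map_pow, map_one, map_ofNat,
    AlgEquiv.commutes, apply_apply_apply_of_orderOf_eq_three hσ]
  ring

end Trinomial

section CyclicCubic

variable {F E : Type*} [Field F] [Field E] [Algebra F E] [FiniteDimensional F E] [IsGalois F E]
  {σ : Gal(E/F)}

theorem orderOf_eq_finrank_of_forall_mem_zpowers (hσ : ∀ τ, τ ∈ Subgroup.zpowers σ) :
    orderOf σ = Module.finrank F E := by
  rw [orderOf_eq_card_of_forall_mem_zpowers hσ, IsGalois.card_aut_eq_finrank]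

theorem algebraMap_trace_eq_sum_range (hσ : ∀ τ, τ ∈ Subgroup.zpowers σ) (u : E) :
    algebraMap F E (Algebra.trace F E u) =
      ∑ i ∈ Finset.range (Module.finrank F E), (σ ^ i) u := by
  classical
  rw [trace_eq_sum_automorphisms, ← IsCyclic.image_range_orderOf hσ,
    Finset.sum_image (by simpa using pow_injOn_Iio_orderOf),
    orderOf_eq_finrank_of_forall_mem_zpowers hσ]

theorem algebraMap_norm_eq_prod_range (hσ : ∀ τ, τ ∈ Subgroup.zpowers σ) (u : E) :
    algebraMap F E (Algebra.norm F u) =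
      ∏ i ∈ Finset.range (Module.finrank F E), (σ ^ i) u := by
  classical
  rw [Algebra.norm_eq_prod_automorphisms, ← IsCyclic.image_range_orderOf hσ,
    Finset.prod_image (by simpa using pow_injOn_Iio_orderOf),
    orderOf_eq_finrank_of_forall_mem_zpowers hσ]

theorem algebraMap_trace_eq_add (hσ : ∀ τ, τ ∈ Subgroup.zpowers σ)
    (h3 : Module.finrank F E = 3) (u : E) :
    algebraMap F E (Algebra.trace F E u) = u + σ u + σ (σ u) := by
  simp [algebraMap_trace_eq_sum_range hσ, h3, Finset.sum_range_succ]

theorem algebraMap_norm_eq_mul (hσ : ∀ τ, τ ∈ Subgroup.zpowers σ)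
    (h3 : Module.finrank F E = 3) (u : E) :
    algebraMap F E (Algebra.norm F u) = u * σ u * σ (σ u) := by
  simp [algebraMap_norm_eq_prod_range hσ, h3, Finset.prod_range_succ]

theorem exists_ne_zero_apply_eq_mul_iff_norm_eq_one (hσ : ∀ τ, τ ∈ Subgroup.zpowers σ)
    (h3 : Module.finrank F E = 3) (u : E) :
    (∃ b, b ≠ 0 ∧ σ b = u * b) ↔ Algebra.norm F u = 1 := by
  have hord : orderOf σ = 3 := (orderOf_eq_finrank_of_forall_mem_zpowers hσ).trans h3
  have hdet : (dicksonMatrix σ u (-1) 0).det = algebraMap F E (Algebra.norm F u) - 1 := by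
    simp only [det_dicksonMatrix, map_neg, map_one, map_zero, algebraMap_norm_eq_mul hσ h3]
    ring
  rw [← (algebraMap F E).injective.eq_iff, map_one, ← sub_eq_zero (b := (1 : E)), ← hdet,
    ← exists_ne_zero_iff_det_dicksonMatrix_eq_zero hord]
  refine exists_congr fun b => and_congr_right fun _ => ?_
  rw [← sub_eq_zero, ← neg_eq_zero]
  exact Eq.congr_left (by ring)

theorem det_dicksonMatrix_trinomial_of_apply_eq_mul (hσ : ∀ τ, τ ∈ Subgroup.zpowers σ)
    (h3 : Module.finrank F E = 3) (A B : F) {u b : E} (hb : b ≠ 0) (hub : σ b = u * b) :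
    (dicksonMatrix σ (2 * algebraMap F E B * b) (σ b + algebraMap F E A * b)
        (b + algebraMap F E A * σ (σ b))).det =
      2 * (b * σ b * σ (σ b)) * algebraMap F E (normCoeff A B +
        A * (1 - A * B) * Algebra.trace F E u⁻¹ + (A ^ 2 - B) * Algebra.trace F E u) := by
  have hord : orderOf σ = 3 := (orderOf_eq_finrank_of_forall_mem_zpowers hσ).trans h3
  have hcube := apply_apply_apply_of_orderOf_eq_three hord b
  have hu : u = σ b / b := by rw [hub, mul_div_cancel_right₀ _ hb]
  have hb₁ : σ b ≠ 0 := (map_ne_zero σ).mpr hb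
  have hb₂ : σ (σ b) ≠ 0 := (map_ne_zero σ).mpr hb₁
  rw [det_dicksonMatrix_trinomial hord, map_add, map_add, map_mul _ _ (Algebra.trace F E u),
    map_mul _ _ (Algebra.trace F E u⁻¹), algebraMap_trace_eq_add hσ h3,
    algebraMap_trace_eq_add hσ h3, hu]
  simp only [inv_div, map_div₀, hcube]
  field_simp
  ring

open Polynomial in
theorem minpoly_eq_toPoly_of_natDegree_eq_three (hσ : ∀ τ, τ ∈ Subgroup.zpowers σ)
    (h3 : Module.finrank F E = 3) {u : E} (hu : (minpoly F u).natDegree = 3) :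
    minpoly F u = Cubic.toPoly ⟨1, -Algebra.trace F E u,
      Algebra.norm F u * Algebra.trace F E u⁻¹, -Algebra.norm F u⟩ := by
  have hu0 : u ≠ 0 := by
    rintro rfl
    simp at hu
  have hmonic := Cubic.monic_of_a_eq_one' (b := -Algebra.trace F E u)
    (c := Algebra.norm F u * Algebra.trace F E u⁻¹) (d := -Algebra.norm F u)
  refine (eq_of_monic_of_dvd_of_natDegree_le (minpoly.monic (.of_finite F u)) hmonic
    (minpoly.dvd F u ?_) ?_).symm
  · simp only [Cubic.toPoly, map_add, map_mul, map_neg, map_one, aeval_C, aeval_X, map_pow,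
      algebraMap_trace_eq_add hσ h3, algebraMap_norm_eq_mul hσ h3, map_inv₀]
    have h₁ : σ u ≠ 0 := (map_ne_zero σ).mpr hu0
    have h₂ : σ (σ u) ≠ 0 := (map_ne_zero σ).mpr h₁
    field_simp
    ring
  · rw [hu]
    exact (Cubic.natDegree_of_a_ne_zero' one_ne_zero).le

theorem norm_algebraMap_add_algebraMap_mul (hσ : ∀ τ, τ ∈ Subgroup.zpowers σ)
    (h3 : Module.finrank F E = 3) (P Q : F) {u : E} (hu : Algebra.norm F u = 1) :
    Algebra.norm F (algebraMap F E Q + algebraMap F E P * u) =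
      Q ^ 3 + Q ^ 2 * P * Algebra.trace F E u + Q * P ^ 2 * Algebra.trace F E u⁻¹ + P ^ 3 := by
  have hnorm := algebraMap_norm_eq_mul hσ h3 u
  rw [hu, map_one] at hnorm
  have hu₀ : u ≠ 0 := by
    rintro rfl
    simp at hnorm
  have hu₁ : σ u ≠ 0 := (map_ne_zero σ).mpr hu₀
  have hu₂ : σ (σ u) ≠ 0 := (map_ne_zero σ).mpr hu₁
  apply (algebraMap F E).injective
  simp only [algebraMap_norm_eq_mul hσ h3, map_add, map_mul, map_pow,
    algebraMap_trace_eq_add hσ h3, map_inv₀, AlgEquiv.commutes]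
  field_simp
  linear_combination -(algebraMap F E Q * algebraMap F E P ^ 2 *
    (u * σ u + σ u * σ (σ u) + σ (σ u) * u) + algebraMap F E P ^ 3 * (u * σ u * σ (σ u))) * hnorm

end CyclicCubic

theorem exists_forall_cubic_ne_zero {F : Type*} [Field F] [Finite F] {P Q R : F}
    (hK : P ^ 3 + Q ^ 3 ≠ P * Q * R) :
    ∃ t s, R + P * s + Q * t = 0 ∧ ∀ x, x ^ 3 - t * x ^ 2 + s * x - 1 ≠ 0 := by
  obtain ⟨t₀, s₀, hline⟩ : ∃ t s, R + P * s + Q * t = 0 := by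
    rcases eq_or_ne P 0 with rfl | hP
    · have hQ : Q ≠ 0 := by
        rintro rfl
        simp at hK
      exact ⟨-R / Q, 0, by field_simp; ring⟩
    · exact ⟨0, -R / P, by field_simp; ring⟩
  -- Cubics at distinct points of the line share no root, so otherwise the `q` points of the line
  -- would have distinct roots among the `q - 1` nonzero elements of `F`.
  by_contra! hroots
  have hroot : ∀ k : F, ∃ x,
      x ^ 3 - (t₀ + k * P) * x ^ 2 + (s₀ - k * Q) * x - 1 = 0 := fun k =>
    hroots _ _ (by linear_combination hline)
  choose root hroot using hroot
  have hne : ∀ k, root k ≠ 0 := by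
    intro k hk
    simpa [hk] using hroot k
  have hinj : Function.Injective root := by
    intro k l hkl
    by_contra hkl'
    have hk := hroot k
    rw [hkl] at hk
    have hcommon : P * root l + Q = 0 := by
      refine (mul_eq_zero.mp ?_).resolve_left (mul_ne_zero (sub_ne_zero.mpr hkl') (hne l))
      linear_combination hroot l - hk
    apply hK
    linear_combination -P ^ 3 * hroot l +
      (Q ^ 2 - P * Q * root l + P ^ 2 * root l ^ 2 - (t₀ + l * P) * P * (P * root l - Q) +
        (s₀ - l * Q) * P ^ 2) * hcommon - P * Q * hline
  obtain ⟨k, hk⟩ := Finite.injective_iff_surjective.mp hinj 0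
  exact hne k hk

theorem exists_pow_three_eq_one_and_add_mul_sq_eq_zero {F : Type*} [Field F] {P Q : F}
    (h : P ^ 3 + Q ^ 3 = 0) : ∃ m : F, m ^ 3 = 1 ∧ P + Q * m ^ 2 = 0 := by
  rcases eq_or_ne Q 0 with rfl | hQ
  · exact ⟨1, one_pow 3, by simpa using h⟩
  · refine ⟨(P / Q) ^ 2, ?_, ?_⟩
    · field_simp
      linear_combination (P ^ 3 - Q ^ 3) * h
    · field_simp
      linear_combination P * h

theorem exists_norm_eq_one_of_pow_three_add_pow_three_eq_zero {F E : Type*} [Field F] [Field E]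
    [Algebra F E] (h3 : Module.finrank F E = 3) {P Q : F} (h : P ^ 3 + Q ^ 3 = 0) :
    ∃ u : E, Algebra.norm F u = 1 ∧
      P * Algebra.trace F E u⁻¹ + Q * Algebra.trace F E u = 0 := by
  obtain ⟨m, hm, hPm⟩ := exists_pow_three_eq_one_and_add_mul_sq_eq_zero h
  have hm0 : m ≠ 0 := by
    rintro rfl
    simp at hm
  refine ⟨algebraMap F E m, by rw [Algebra.norm_algebraMap, h3, hm], ?_⟩
  rw [← map_inv₀, Algebra.trace_algebraMap, Algebra.trace_algebraMap, h3]
  simp only [nsmul_eq_mul]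
  field_simp
  linear_combination 3 * hPm

section FiniteField

variable {F E : Type*} [Field F] [Field E] [Algebra F E] [Finite E] {σ : Gal(E/F)}

theorem isPlanar_trinomial_iff_forall_norm_eq_one (hσ : ∀ τ, τ ∈ Subgroup.zpowers σ)
    (h3 : Module.finrank F E = 3) (h2 : (2 : F) ≠ 0) (A B : F) :
    IsPlanar (trinomial σ A B) ↔ ∀ u : E, Algebra.norm F u = 1 →
      normCoeff A B + A * (1 - A * B) * Algebra.trace F E u⁻¹ +
        (A ^ 2 - B) * Algebra.trace F E u ≠ 0 := by
  have hord : orderOf σ = 3 := (orderOf_eq_finrank_of_forall_mem_zpowers hσ).trans h3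
  have h2E : (2 : E) ≠ 0 := by simpa only [map_ofNat] using (map_ne_zero (algebraMap F E)).mpr h2
  have hdet : ∀ {u b : E}, b ≠ 0 → σ b = u * b →
      ((dicksonMatrix σ (2 * algebraMap F E B * b) (σ b + algebraMap F E A * b)
        (b + algebraMap F E A * σ (σ b))).det ≠ 0 ↔
      normCoeff A B + A * (1 - A * B) * Algebra.trace F E u⁻¹ +
        (A ^ 2 - B) * Algebra.trace F E u ≠ 0) := by
    intro u b hb hub
    rw [det_dicksonMatrix_trinomial_of_apply_eq_mul hσ h3 A B hb hub, mul_ne_zero_iff,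
      map_ne_zero, and_iff_right]
    simp [hb, h2E]
  rw [isPlanar_trinomial_iff_det_ne_zero hord]
  constructor
  · intro h u hu
    obtain ⟨b, hb, hub⟩ := (exists_ne_zero_apply_eq_mul_iff_norm_eq_one hσ h3 u).mpr hu
    exact (hdet hb hub).mp (h b hb)
  · intro h b hb
    have hub : σ b = σ b / b * b := (div_mul_cancel₀ _ hb).symm
    exact (hdet hb hub).mpr
      (h _ ((exists_ne_zero_apply_eq_mul_iff_norm_eq_one hσ h3 _).mp ⟨b, hb, hub⟩))

open Polynomial in
theorem exists_minpoly_eq_of_natDegree_dvd_finrank {p : F[X]} (hp : Irreducible p)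
    (hmonic : p.Monic) (hdvd : p.natDegree ∣ Module.finrank F E) : ∃ u : E, minpoly F u = p := by
  have : Fact (Irreducible p) := ⟨hp⟩
  have hfinrank : Module.finrank F (AdjoinRoot p) = p.natDegree :=
    finrank_quotient_span_eq_natDegree
  obtain ⟨φ⟩ := FiniteField.nonempty_algHom_of_finrank_dvd (hfinrank.symm ▸ hdvd)
  refine ⟨φ (AdjoinRoot.root p), ?_⟩
  rw [minpoly.algHom_eq φ φ.injective, AdjoinRoot.minpoly_root hp.ne_zero, hmonic, inv_one, C_1,
    mul_one]

theorem exists_trace_norm_of_forall_cubic_ne_zero (hσ : ∀ τ, τ ∈ Subgroup.zpowers σ)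
    (h3 : Module.finrank F E = 3) {b c d : F} (h : ∀ x, x ^ 3 + b * x ^ 2 + c * x + d ≠ 0) :
    ∃ u : E, -Algebra.trace F E u = b ∧ Algebra.norm F u * Algebra.trace F E u⁻¹ = c ∧
      -Algebra.norm F u = d := by
  have hdeg : (Cubic.toPoly ⟨1, b, c, d⟩).natDegree = 3 :=
    Cubic.natDegree_of_a_ne_zero' one_ne_zero
  have hirr : Irreducible (Cubic.toPoly ⟨1, b, c, d⟩) := by
    apply Polynomial.irreducible_of_degree_le_three_of_not_isRoot
    · simp [hdeg]
    · simpa [Cubic.toPoly, Polynomial.IsRoot] using h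
  obtain ⟨u, hu⟩ := exists_minpoly_eq_of_natDegree_dvd_finrank (E := E) hirr
    Cubic.monic_of_a_eq_one' (by rw [hdeg, h3])
  have heq := (minpoly_eq_toPoly_of_natDegree_eq_three hσ h3 (hu ▸ hdeg)).symm.trans hu
  obtain ⟨-, hb, hc, hd⟩ := Cubic.mk.inj ((Cubic.toPoly_injective _ _).mp heq)
  exact ⟨u, hb, hc, hd⟩

theorem pow_three_add_pow_three_eq_of_forall_norm_eq_one (hσ : ∀ τ, τ ∈ Subgroup.zpowers σ)
    (h3 : Module.finrank F E = 3) {P Q R : F}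
    (h : ∀ u : E, Algebra.norm F u = 1 →
      R + P * Algebra.trace F E u⁻¹ + Q * Algebra.trace F E u ≠ 0) :
    P ^ 3 + Q ^ 3 = P * Q * R := by
  have : Finite F := Finite.of_injective _ (algebraMap F E).injective
  by_contra hK
  obtain ⟨t, s, hline, hcubic⟩ := exists_forall_cubic_ne_zero hK
  obtain ⟨u, htrace, hinv, hnorm⟩ := exists_trace_norm_of_forall_cubic_ne_zero (E := E) hσ h3
    (b := -t) (c := s) (d := -1) fun x hx => hcubic x (by linear_combination hx)
  rw [neg_inj] at htrace hnorm
  rw [hnorm, one_mul] at hinv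
  exact h u hnorm (by rw [htrace, hinv, hline])

theorem add_trace_inv_add_trace_ne_zero_of_norm_eq_one (hσ : ∀ τ, τ ∈ Subgroup.zpowers σ)
    (h3 : Module.finrank F E = 3) {P Q R : F} (hK : P ^ 3 + Q ^ 3 = P * Q * R) (hR : R ≠ 0)
    {u : E} (hu : Algebra.norm F u = 1) :
    R + P * Algebra.trace F E u⁻¹ + Q * Algebra.trace F E u ≠ 0 := by
  intro hline
  have hzero : algebraMap F E Q + algebraMap F E P * u = 0 := by
    rw [← Algebra.norm_eq_zero_iff (R := F), norm_algebraMap_add_algebraMap_mul hσ h3 P Q hu]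
    linear_combination hK + P * Q * hline
  have hP : P ≠ 0 := by
    rintro rfl
    obtain rfl : Q = 0 := by simpa using hzero
    simp [hR] at hline
  have hcube : Q ^ 3 = -P ^ 3 := by
    have hQu : algebraMap F E Q = algebraMap F E (-P) * u := by
      rw [map_neg, neg_mul]
      exact eq_neg_of_add_eq_zero_left hzero
    have hnorm := congrArg (Algebra.norm F) hQu
    rwa [map_mul, Algebra.norm_algebraMap, Algebra.norm_algebraMap, h3, hu, mul_one,
      Odd.neg_pow (by decide)] at hnorm
  have hQ : Q = 0 := by
    have hzeroR : P * Q * R = 0 := by rw [← hK, hcube, add_neg_cancel]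
    simpa [hP, hR] using hzeroR
  simp [hQ, hP] at hcube

theorem forall_norm_eq_one_iff (hσ : ∀ τ, τ ∈ Subgroup.zpowers σ)
    (h3 : Module.finrank F E = 3) (P Q R : F) :
    (∀ u : E, Algebra.norm F u = 1 →
      R + P * Algebra.trace F E u⁻¹ + Q * Algebra.trace F E u ≠ 0) ↔
    P ^ 3 + Q ^ 3 = P * Q * R ∧ R ≠ 0 := by
  refine ⟨fun h => ?_, fun ⟨hK, hR⟩ u hu =>
    add_trace_inv_add_trace_ne_zero_of_norm_eq_one hσ h3 hK hR hu⟩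
  have hK := pow_three_add_pow_three_eq_of_forall_norm_eq_one hσ h3 h
  refine ⟨hK, ?_⟩
  rintro rfl
  obtain ⟨u, hu, hzero⟩ := exists_norm_eq_one_of_pow_three_add_pow_three_eq_zero (E := E) h3
    (hK.trans (mul_zero _))
  exact h u hu (by rw [zero_add, hzero])

end FiniteField

section Classification

theorem pow_three_add_pow_three_eq_iff {F : Type*} [Field F] (A B : F) :
    (A * (1 - A * B)) ^ 3 + (A ^ 2 - B) ^ 3 =
        A * (1 - A * B) * (A ^ 2 - B) * normCoeff A B ↔
      A ^ 3 - 2 * A * B + 1 = 0 ∨ A = B ^ 2 ∨ B = 0 := by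
  have hfactor : (A * (1 - A * B)) ^ 3 + (A ^ 2 - B) ^ 3 -
      A * (1 - A * B) * (A ^ 2 - B) * normCoeff A B =
      (A ^ 3 - 2 * A * B + 1) ^ 2 * ((A - B ^ 2) * B) := by
    unfold normCoeff
    ring
  rw [← sub_eq_zero, hfactor, mul_eq_zero, mul_eq_zero, pow_eq_zero_iff two_ne_zero,
    sub_eq_zero (b := B ^ 2)]

theorem normCoeff_ne_zero_iff_of_cubic_eq_zero {F : Type*} [Field F] (h2 : (2 : F) ≠ 0) {A B : F}
    (h : A ^ 3 - 2 * A * B + 1 = 0) :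
    normCoeff A B ≠ 0 ↔ A ^ 3 ≠ 1 ∧ A ^ 3 ≠ -1 := by
  have hA : A ≠ 0 := by
    rintro rfl
    simp at h
  have hR : 2 * A ^ 3 * normCoeff A B = (A ^ 3 - 1) ^ 2 * (A ^ 3 + 1) := by
    unfold normCoeff
    linear_combination (4 * A ^ 3 - (A ^ 3 + 1) ^ 2 - (A ^ 3 + 1) * (2 * A * B) -
      (2 * A * B) ^ 2 + 2 * A ^ 3) * h
  rw [← mul_ne_zero_iff_left (mul_ne_zero h2 (pow_ne_zero 3 hA)), hR, mul_ne_zero_iff,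
    pow_ne_zero_iff two_ne_zero, sub_ne_zero, ← sub_neg_eq_add, sub_ne_zero]

theorem isPlanar_trinomial_iff {F E : Type*} [Field F] [Field E] [Algebra F E] [Finite E]
    {σ : Gal(E/F)} (hσ : ∀ τ, τ ∈ Subgroup.zpowers σ) (h3 : Module.finrank F E = 3)
    (h2 : (2 : F) ≠ 0) (A B : F) :
    IsPlanar (trinomial σ A B) ↔
      (A ^ 3 - 2 * A * B + 1 = 0 ∧ A ^ 3 ≠ 1 ∧ A ^ 3 ≠ -1) ∨ (A = B ^ 2 ∧ B ^ 3 ≠ 1) ∨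
        (B = 0 ∧ A ^ 3 ≠ -1) := by
  rw [isPlanar_trinomial_iff_forall_norm_eq_one hσ h3 h2, forall_norm_eq_one_iff hσ h3,
    pow_three_add_pow_three_eq_iff, or_and_right, or_and_right]
  refine or_congr (and_congr_right fun h => ?_)
    (or_congr (and_congr_right fun h => ?_) (and_congr_right fun h => ?_))
  · exact normCoeff_ne_zero_iff_of_cubic_eq_zero h2 h
  · have hR : normCoeff A B = (B ^ 3 - 1) ^ 2 := by
      rw [normCoeff, h]
      ring
    rw [hR, pow_ne_zero_iff two_ne_zero, sub_ne_zero]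
  · have hR : normCoeff A B = A ^ 3 - -1 := by
      rw [normCoeff, h]
      ring
    rw [hR, sub_ne_zero]

end Classification

section Count

open Finset

theorem card_filter_pow_eq_one {F : Type*} [Field F] [Fintype F] [DecidableEq F] {n : ℕ}
    (hn : n ≠ 0) : #{x : F | x ^ n = 1} = n.gcd (Fintype.card F - 1) := by
  have : NeZero n := ⟨hn⟩
  have hker := IsCyclic.card_powMonoidHom_ker (G := Fˣ) n
  rw [Nat.card_eq_fintype_card (α := Fˣ), Fintype.card_units, Nat.gcd_comm] at hker
  rw [← hker, ← Fintype.card_subtype, ← Nat.card_eq_fintype_card]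
  exact Nat.card_congr ((rootsOfUnityEquivNthRoots F n).trans
    (Equiv.subtypeEquivRight fun x => Polynomial.mem_nthRoots (Nat.pos_of_ne_zero hn))).symm

theorem card_filter_pow_eq_neg_one {F : Type*} [Field F] [Fintype F] [DecidableEq F] {n : ℕ}
    (hn : Odd n) : #{x : F | x ^ n = -1} = n.gcd (Fintype.card F - 1) := by
  rw [← card_filter_pow_eq_one (F := F) hn.pos.ne']
  exact card_equiv (Equiv.neg F) fun x => by simp [hn.neg_pow, neg_eq_iff_eq_neg]

variable {F : Type*} [Field F] [Fintype F] [DecidableEq F]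

theorem card_axis_add_gcd :
    #{p : F × F | p.2 = 0 ∧ p.1 ^ 3 ≠ -1} + Nat.gcd 3 (Fintype.card F - 1) =
      Fintype.card F := by
  have himage : ({p : F × F | p.2 = 0 ∧ p.1 ^ 3 ≠ -1} : Finset (F × F)) =
      ({a : F | a ^ 3 = -1} : Finset F)ᶜ ×ˢ {0} := by
    ext ⟨a, b⟩
    simp only [mem_filter, mem_univ, true_and, mem_product, mem_compl, mem_singleton, and_comm]
  rw [himage, card_product, card_singleton, mul_one,
    ← card_filter_pow_eq_neg_one (F := F) (n := 3) (by decide), card_compl_add_card]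

theorem card_parabola_add_gcd :
    #{p : F × F | p.1 = p.2 ^ 2 ∧ p.2 ^ 3 ≠ 1} + Nat.gcd 3 (Fintype.card F - 1) =
      Fintype.card F := by
  have himage : ({p : F × F | p.1 = p.2 ^ 2 ∧ p.2 ^ 3 ≠ 1} : Finset (F × F)) =
      ({b : F | b ^ 3 = 1} : Finset F)ᶜ.image fun b => (b ^ 2, b) := by
    ext ⟨a, b⟩
    simp [and_comm, eq_comm]
  rw [himage, card_image_of_injective _ fun _ _ h => congrArg Prod.snd h,
    ← card_filter_pow_eq_one (F := F) three_ne_zero, card_compl_add_card]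

theorem card_cubic_curve_add_two_mul_gcd (h2 : (2 : F) ≠ 0) :
    #{p : F × F | p.1 ^ 3 - 2 * p.1 * p.2 + 1 = 0 ∧ p.1 ^ 3 ≠ 1 ∧ p.1 ^ 3 ≠ -1} +
        (2 * Nat.gcd 3 (Fintype.card F - 1) + 1) = Fintype.card F := by
  set excluded : Finset F :=
    insert 0 (({a | a ^ 3 = 1} : Finset F) ∪ ({a | a ^ 3 = -1} : Finset F))
  have hexcluded : #excluded = 2 * Nat.gcd 3 (Fintype.card F - 1) + 1 := by
    have hdisj : Disjoint ({a | a ^ 3 = 1} : Finset F) ({a | a ^ 3 = -1} : Finset F) := by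
      refine disjoint_filter.mpr fun a _ h₁ h₂ => h2 ?_
      linear_combination h₂ - h₁
    rw [card_insert_of_notMem (by simp), card_union_of_disjoint hdisj,
      card_filter_pow_eq_one three_ne_zero, card_filter_pow_eq_neg_one (by decide), two_mul]
  have himage : ({p : F × F | p.1 ^ 3 - 2 * p.1 * p.2 + 1 = 0 ∧ p.1 ^ 3 ≠ 1 ∧ p.1 ^ 3 ≠ -1} :
      Finset (F × F)) = excludedᶜ.image fun a => (a, (a ^ 3 + 1) / (2 * a)) := by
    ext ⟨a, b⟩
    rcases eq_or_ne a 0 with rfl | ha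
    · simp [excluded]
    · have hcurve : a ^ 3 - 2 * a * b + 1 = 0 ↔ (a ^ 3 + 1) / (2 * a) = b := by
        rw [div_eq_iff (mul_ne_zero h2 ha), ← sub_eq_zero (b := b * (2 * a))]
        exact Eq.congr_left (by ring)
      have hmem : a ∉ excluded ↔ a ^ 3 ≠ 1 ∧ a ^ 3 ≠ -1 := by simp [excluded, ha]
      simp [hcurve, hmem, and_comm]
  rw [himage, card_image_of_injective _ fun _ _ h => congrArg Prod.fst h, ← hexcluded,
    card_compl_add_card]

theorem card_axis_union_parabola_add :
    #{p : F × F | (p.1 = p.2 ^ 2 ∧ p.2 ^ 3 ≠ 1) ∨ (p.2 = 0 ∧ p.1 ^ 3 ≠ -1)} +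
        (2 * Nat.gcd 3 (Fintype.card F - 1) + 1) = 2 * Fintype.card F := by
  have hinter : ({p : F × F | (p.1 = p.2 ^ 2 ∧ p.2 ^ 3 ≠ 1) ∧ p.2 = 0 ∧ p.1 ^ 3 ≠ -1} :
      Finset (F × F)) = {(0, 0)} := by
    ext ⟨a, b⟩
    simp only [mem_filter, mem_univ, true_and, mem_singleton, Prod.mk.injEq]
    constructor
    · rintro ⟨⟨rfl, -⟩, rfl, -⟩
      simp
    · rintro ⟨rfl, rfl⟩
      simp
  have hunion := card_union_add_card_inter
    ({p | p.1 = p.2 ^ 2 ∧ p.2 ^ 3 ≠ 1} : Finset (F × F)) {p | p.2 = 0 ∧ p.1 ^ 3 ≠ -1}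
  rw [← filter_or, ← filter_and, hinter, card_singleton] at hunion
  have haxis := card_axis_add_gcd (F := F)
  have hparabola := card_parabola_add_gcd (F := F)
  omega

theorem card_union_curves_add (h2 : (2 : F) ≠ 0) :
    #{p : F × F | (p.1 ^ 3 - 2 * p.1 * p.2 + 1 = 0 ∧ p.1 ^ 3 ≠ 1 ∧ p.1 ^ 3 ≠ -1) ∨
        (p.1 = p.2 ^ 2 ∧ p.2 ^ 3 ≠ 1) ∨ (p.2 = 0 ∧ p.1 ^ 3 ≠ -1)} +
      (4 * Nat.gcd 3 (Fintype.card F - 1) + 2) = 3 * Fintype.card F := by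
  rw [filter_or, card_union_of_disjoint]
  · have hcubic := card_cubic_curve_add_two_mul_gcd h2
    have hunion := card_axis_union_parabola_add (F := F)
    omega
  · refine disjoint_filter.mpr ?_
    rintro ⟨a, b⟩ - ⟨h, -⟩ (⟨hab, hb⟩ | ⟨hb, ha⟩)
    · have hsq : (b ^ 3 - 1) ^ 2 = 0 := by
        linear_combination h - (a ^ 2 + a * b ^ 2 + b ^ 4 - 2 * b) * hab
      exact hb (sub_eq_zero.mp (pow_eq_zero_iff two_ne_zero |>.mp hsq))
    · exact ha (by linear_combination h + 2 * a * hb)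

end Count

theorem mem_zpowers_frobenius {F E : Type*} [Field F] [Fintype F] [Field E] [Finite E]
    [Algebra F E] (τ : Gal(E/F)) :
    τ ∈ Subgroup.zpowers (FiniteField.frobeniusAlgEquivOfAlgebraic F E) := by
  obtain ⟨n, hn⟩ := (FiniteField.bijective_frobeniusAlgEquivOfAlgebraic_pow F E).2 τ
  exact ⟨n, by simpa using hn⟩

theorem trinomial_frobenius {F E : Type*} [Field F] [Fintype F] [Field E] [Finite E]
    [Algebra F E] (A B : F) :
    trinomial (FiniteField.frobeniusAlgEquivOfAlgebraic F E) A B = fun x =>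
      x * (x ^ (Fintype.card F ^ 2) + algebraMap F E A * x ^ Fintype.card F +
        algebraMap F E B * x) := by
  ext x
  simp only [trinomial, FiniteField.coe_frobeniusAlgEquivOfAlgebraic, ← pow_mul, pow_two]

theorem stmt_19_general {F E : Type*} [Field F] [Fintype F] [Field E] [Algebra F E]
    (hodd : Odd (Fintype.card F)) (h3 : Module.finrank F E = 3) :
    Nat.card {p : F × F // IsPlanar fun x : E => x * (x ^ (Fintype.card F ^ 2) +
        algebraMap F E p.1 * x ^ Fintype.card F + algebraMap F E p.2 * x)} =
      3 * Fintype.card F - 2 - 4 * Nat.gcd 3 (Fintype.card F - 1) := by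
  classical
  have : Module.Finite F E := Module.finite_of_finrank_pos (by omega)
  have : Finite E := Module.finite_of_finite F
  have h2 : (2 : F) ≠ 0 := Ring.two_ne_zero fun hchar =>
    Nat.not_even_iff_odd.mpr hodd (Nat.even_iff.mpr (FiniteField.even_card_iff_char_two.mp hchar))
  simp only [← trinomial_frobenius, isPlanar_trinomial_iff mem_zpowers_frobenius h3 h2]
  rw [Nat.card_eq_fintype_card, Fintype.card_subtype]
  have hcount := card_union_curves_add h2
  omega

/-- For `q > 3` an odd prime power, the number of pairs `(A, B) ∈ F_q × F_q` such that
`f_{A,B}(x) = x (x^{q²} + A x^q + B x)` is planar on `F_{q³}` is `3q - 2 - 4·gcd(3, q-1)`. -/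
theorem stmt_19 (q : ℕ) (hp : IsPrimePow q) (hq : Odd q) (hq3 : 3 < q)
    (F E : Type*) [Field F] [Fintype F] [Field E] [Fintype E] [Algebra F E]
    (hF : Fintype.card F = q) (hE : Fintype.card E = q ^ 3) :
    Nat.card {p : F × F // ∀ C : E, C ≠ 0 → Function.Bijective (fun x : E =>
        (x + C) * ((x + C) ^ (q ^ 2) + algebraMap F E p.1 * (x + C) ^ q
            + algebraMap F E p.2 * (x + C))
          - x * (x ^ (q ^ 2) + algebraMap F E p.1 * x ^ q + algebraMap F E p.2 * x))}
      = 3 * q - 2 - 4 * Nat.gcd 3 (q - 1) := by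
  subst hF
  exact stmt_19_general hq
    (Nat.pow_right_injective Fintype.one_lt_card (Module.card_eq_pow_finrank.symm.trans hE))
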